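/- arXiv:1509.06501 — 2 statements merged into one kernel-verified Lean document; each statement's English description precedes it below -/
import Mathlib

section
/- There exists an NFA with all states final, over a two-letter alphabet and with four states, that is not flankable: the automaton with states {q0,q1,q2,q3}, initial state q0, and transitions q0 →a q1, q0 →b q1, q0 →a q2, q2 →b q3 admits no flanking relation. -/
/-- A nondeterministic finite automaton (all states final). -/
structure NFA' (Q A : Type) where
  E : Q → A → Q → Prop
  I : Set Q

namespace NFA'

variable {Q A : Type}

/-- One step of the automaton on a set of states. -/
def step (M : NFA' Q A) (S : Set Q) (a : A) : Set Q := {q' | ∃ q ∈ S, M.E q a q'}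

/-- `M.reach u` is the set of states reached after reading the word `u`
(`M(ε) = I`, `M(u·a) = {q' | ∃ q ∈ M(u), (q,a,q') ∈ E}`). -/
def reach (M : NFA' Q A) (u : List A) : Set Q := u.foldl M.step M.I

/-- The (prefix-closed) language of `M`: words `u` with `M(u) ≠ ∅`. -/
def lang (M : NFA' Q A) : Set (List A) := {u | (M.reach u).Nonempty}

/-- `F` flanks `M`: for all words `u` and symbols `a`,
`u ∈ L(M) ∧ u·a ∉ L(M)` iff some state of `M(u)` forbids `a`. -/
def Flanks (M : NFA' Q A) (F : Q → A → Prop) : Prop :=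
  ∀ (u : List A) (a : A),
    (u ∈ M.lang ∧ u ++ [a] ∉ M.lang) ↔ ∃ q ∈ M.reach u, F q a

end NFA'

/-- The 4-state NFA over a 2-letter alphabet (`0` is `a`, `1` is `b`) with
transitions q0 →a q1, q0 →b q1, q0 →a q2, q2 →b q3 and initial state q0. -/
def M4 : NFA' (Fin 4) (Fin 2) where
  E q x q' :=
    (q = 0 ∧ x = 0 ∧ q' = 1) ∨ (q = 0 ∧ x = 1 ∧ q' = 1) ∨
    (q = 0 ∧ x = 0 ∧ q' = 2) ∨ (q = 2 ∧ x = 1 ∧ q' = 3)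
  I := {0}

/-!
Flanking decides whether a symbol is forbidden after `u` by inspecting the states of `M(u)` one at a
time. In `M4` the word `b` leads only to `q1`, which has no outgoing `b`, so `q1` must forbid `b`.
But the word `a` also leads to `q1`, and after it `b` is allowed thanks to the other state reached,
`q2`.
-/

namespace NFA'

variable {Q A : Type} {M : NFA' Q A}

theorem reach_append_singleton (u : List A) (a : A) :
    M.reach (u ++ [a]) = M.step (M.reach u) a :=
  List.foldl_append

theorem append_singleton_mem_lang_iff {u : List A} {a : A} :
    u ++ [a] ∈ M.lang ↔ ∃ q ∈ M.reach u, ∃ q', M.E q a q' :=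
  calc u ++ [a] ∈ M.lang
    _ ↔ (M.step (M.reach u) a).Nonempty := by rw [← reach_append_singleton]; rfl
    _ ↔ ∃ q', ∃ q ∈ M.reach u, M.E q a q' := Iff.rfl
    _ ↔ ∃ q ∈ M.reach u, ∃ q', M.E q a q' := by grind

theorem exists_flanks_iff :
    (∃ F, M.Flanks F) ↔
      ∀ u a, u ∈ M.lang → u ++ [a] ∉ M.lang →
        ∃ q ∈ M.reach u, ∀ v, q ∈ M.reach v → v ++ [a] ∉ M.lang := by
  constructor
  · rintro ⟨F, hF⟩ u a hu hua
    obtain ⟨q, hq, hFq⟩ := (hF u a).mp ⟨hu, hua⟩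
    exact ⟨q, hq, fun v hqv ↦ ((hF v a).mpr ⟨q, hqv, hFq⟩).2⟩
  · intro h
    -- Every flanking relation is contained in this one.
    refine ⟨fun q a ↦ ∀ v, q ∈ M.reach v → v ++ [a] ∉ M.lang, fun u a ↦ ⟨?_, ?_⟩⟩
    · rintro ⟨hu, hua⟩
      exact h u a hu hua
    · rintro ⟨q, hq, hforbid⟩
      exact ⟨⟨q, hq⟩, hforbid u hq⟩

end NFA'

namespace M4

theorem reach_a : M4.reach [0] = {1, 2} := by
  ext q
  simp [NFA'.reach, NFA'.step, M4]

theorem reach_b : M4.reach [1] = {1} := by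
  ext q
  simp [NFA'.reach, NFA'.step, M4]

theorem not_E_one (x : Fin 2) (q : Fin 4) : ¬ M4.E 1 x q := by
  simp [M4]

theorem E_two_b_three : M4.E 2 1 3 := by
  simp [M4]

end M4

/-- the automaton `M4` is not flankable. -/
theorem stmt4 : ¬ ∃ F : Fin 4 → Fin 2 → Prop, M4.Flanks F := by
  rw [NFA'.exists_flanks_iff]
  intro h
  have hb : [1] ∈ M4.lang := ⟨1, by simp [M4.reach_b]⟩
  have hbb : [1] ++ [1] ∉ M4.lang := by
    rw [NFA'.append_singleton_mem_lang_iff]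
    simp [M4.reach_b, M4.not_E_one]
  have hab : [0] ++ [1] ∈ M4.lang :=
    NFA'.append_singleton_mem_lang_iff.mpr ⟨2, by simp [M4.reach_a], 3, M4.E_two_b_three⟩
  have hsub : M4.reach [1] ⊆ M4.reach [0] := by
    simp [M4.reach_a, M4.reach_b]
  obtain ⟨q, hq, hforbid⟩ := h [1] 1 hb hbb
  exact hforbid [0] (hsub hq) hab
end

section
/- Let (M1, F1) and (M2, F2) be FFA over the same alphabet Σ, with Mi = (Qi, Σ, Ei, Ii). Let P be the NFA with state set (Q1×Q2) ∪ {⊤}, initial states I1×I2, and transitions: (q1,q2) →a (q1',q2') whenever q1 →a q1' in M1 and q2 →a q2' in M2; (q1,q2) →a ⊤ for every q1 ∈ Q1 whenever (q2,a) ∈ F2; and ⊤ →a ⊤ for every a ∈ Σ. Define F on the states of P by ((q1,q2),a) ∈ F iff (q1,a) ∈ F1 and there exists q2' with q2 →a q2' in M2, and (⊤,a) ∉ F for all a. Then F flanks P. -/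
/-- Quotient construction for two FFA, with a sink state `⊤` (encoded as `none`):
`(q1,q2) →a (q1',q2')` when `q1 →a q1'` and `q2 →a q2'`; `(q1,q2) →a ⊤` when
`(q2,a) ∈ F2`; and `⊤ →a ⊤` for every `a`. -/
def quotAut {Q1 Q2 A : Type} (M1 : NFA' Q1 A) (M2 : NFA' Q2 A)
    (F2 : Q2 → A → Prop) : NFA' (Option (Q1 × Q2)) A where
  E s a s' :=
    (∃ q1 q2 q1' q2', s = some (q1, q2) ∧ s' = some (q1', q2') ∧
        M1.E q1 a q1' ∧ M2.E q2 a q2') ∨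
    (∃ q1 q2, s = some (q1, q2) ∧ s' = none ∧ F2 q2 a) ∨
    (s = none ∧ s' = none)
  I := {s | ∃ q1 ∈ M1.I, ∃ q2 ∈ M2.I, s = some (q1, q2)}

/-!
A word `u` leads to the state `(q₁, q₂)` of the quotient iff it leads to `q₁` in `M1` and to `q₂` in
`M2`, and it leads to the sink only if it has left `L(M2)`. So, as soon as `F2` flanks `M2`, the
letter `a` takes `u` out of the language of the quotient iff it takes `u` out of `L(M1)` while
`u·a` stays in `L(M2)`. Since the two components of a reachable pair can be chosen independently,
this is what the flanking relation of the quotient expresses when `F1` flanks `M1`.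
-/

namespace NFA'

variable {Q A : Type} {M : NFA' Q A} {u : List A} {a : A}

theorem mem_lang : u ∈ M.lang ↔ ∃ q, q ∈ M.reach u := Iff.rfl

theorem mem_reach_append_singleton {q' : Q} :
    q' ∈ M.reach (u ++ [a]) ↔ ∃ q ∈ M.reach u, M.E q a q' := by
  simp [reach, step]

theorem append_singleton_mem_lang :
    u ++ [a] ∈ M.lang ↔ ∃ q ∈ M.reach u, ∃ q', M.E q a q' := by
  simp only [mem_lang, mem_reach_append_singleton]
  tauto

theorem mem_lang_of_append {v : List A} (h : u ++ v ∈ M.lang) : u ∈ M.lang := by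
  induction v using List.reverseRecOn with
  | nil => simpa using h
  | append_singleton v a ih =>
    rw [← List.append_assoc] at h
    obtain ⟨q, hq, -⟩ := append_singleton_mem_lang.1 h
    exact ih ⟨q, hq⟩

end NFA'

namespace quotAut

open NFA'

variable {Q1 Q2 A : Type} {M1 : NFA' Q1 A} {M2 : NFA' Q2 A} {F2 : Q2 → A → Prop}
  {u : List A} {a : A} {q1 q1' : Q1} {q2 q2' : Q2}

@[simp]
theorem E_some_some :
    (quotAut M1 M2 F2).E (some (q1, q2)) a (some (q1', q2')) ↔ M1.E q1 a q1' ∧ M2.E q2 a q2' := by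
  simp [quotAut]

@[simp]
theorem E_some_none : (quotAut M1 M2 F2).E (some (q1, q2)) a none ↔ F2 q2 a := by
  simp [quotAut]

@[simp]
theorem not_E_none_some : ¬ (quotAut M1 M2 F2).E none a (some (q1, q2)) := by
  simp [quotAut]

@[simp]
theorem E_none_none : (quotAut M1 M2 F2).E none a none := by
  simp [quotAut]

theorem some_mem_reach :
    some (q1, q2) ∈ (quotAut M1 M2 F2).reach u ↔ q1 ∈ M1.reach u ∧ q2 ∈ M2.reach u := by
  induction u using List.reverseRecOn generalizing q1 q2 with
  | nil => simp [reach, quotAut]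
  | append_singleton u a ih =>
    simp only [mem_reach_append_singleton, Option.exists, Prod.exists, ih, E_some_some,
      not_E_none_some, and_false, false_or]
    tauto

theorem exists_some_mem_reach {P1 : Q1 → Prop} {P2 : Q2 → Prop} :
    (∃ q1 q2, some (q1, q2) ∈ (quotAut M1 M2 F2).reach u ∧ P1 q1 ∧ P2 q2) ↔
      (∃ q1 ∈ M1.reach u, P1 q1) ∧ ∃ q2 ∈ M2.reach u, P2 q2 := by
  simp only [some_mem_reach]
  tauto

theorem mem_lang :
    u ∈ (quotAut M1 M2 F2).lang ↔
      none ∈ (quotAut M1 M2 F2).reach u ∨ u ∈ M1.lang ∧ u ∈ M2.lang := by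
  simp only [NFA'.mem_lang, Option.exists, Prod.exists, some_mem_reach]
  tauto

theorem none_mem_reach_append_singleton (h2 : M2.Flanks F2) :
    none ∈ (quotAut M1 M2 F2).reach (u ++ [a]) ↔
      none ∈ (quotAut M1 M2 F2).reach u ∨
        u ∈ M1.lang ∧ u ∈ M2.lang ∧ u ++ [a] ∉ M2.lang := by
  rw [h2 u a]
  simp only [mem_reach_append_singleton, NFA'.mem_lang, Option.exists, Prod.exists, some_mem_reach,
    E_none_none, E_some_none, and_true]
  tauto

theorem notMem_lang_of_none_mem_reach (h2 : M2.Flanks F2)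
    (h : none ∈ (quotAut M1 M2 F2).reach u) : u ∉ M2.lang := by
  induction u using List.reverseRecOn with
  | nil => simp [reach, quotAut] at h
  | append_singleton u a ih =>
    rcases (none_mem_reach_append_singleton h2).1 h with hu | ⟨-, -, hua⟩
    · exact mt mem_lang_of_append (ih hu)
    · exact hua

theorem mem_lang_and_append_singleton_notMem_lang_iff (h2 : M2.Flanks F2) :
    (u ∈ (quotAut M1 M2 F2).lang ∧ u ++ [a] ∉ (quotAut M1 M2 F2).lang) ↔
      (u ∈ M1.lang ∧ u ++ [a] ∉ M1.lang) ∧ u ++ [a] ∈ M2.lang := by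
  rw [mem_lang, mem_lang, none_mem_reach_append_singleton h2]
  constructor
  · rintro ⟨hu, hua⟩
    obtain ⟨hu1, hu2⟩ : u ∈ M1.lang ∧ u ∈ M2.lang := hu.resolve_left fun h => hua (.inl (.inl h))
    have hua2 : u ++ [a] ∈ M2.lang := by
      by_contra h
      exact hua (.inl (.inr ⟨hu1, hu2, h⟩))
    exact ⟨⟨hu1, fun hua1 => hua (.inr ⟨hua1, hua2⟩)⟩, hua2⟩
  · rintro ⟨⟨hu1, hua1⟩, hua2⟩
    have hu2 : u ∈ M2.lang := mem_lang_of_append hua2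
    have hsink : none ∉ (quotAut M1 M2 F2).reach u :=
      fun h => notMem_lang_of_none_mem_reach h2 h hu2
    tauto

end quotAut

theorem stmt9_general {Q1 Q2 A : Type} (M1 : NFA' Q1 A) (M2 : NFA' Q2 A)
    (F1 : Q1 → A → Prop) (F2 : Q2 → A → Prop)
    (h1 : M1.Flanks F1) (h2 : M2.Flanks F2) :
    (quotAut M1 M2 F2).Flanks
      (fun s a => ∃ q1 q2, s = some (q1, q2) ∧ F1 q1 a ∧ ∃ q2', M2.E q2 a q2') := by
  intro u a
  calc (u ∈ (quotAut M1 M2 F2).lang ∧ u ++ [a] ∉ (quotAut M1 M2 F2).lang)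
    _ ↔ (u ∈ M1.lang ∧ u ++ [a] ∉ M1.lang) ∧ u ++ [a] ∈ M2.lang :=
      quotAut.mem_lang_and_append_singleton_notMem_lang_iff h2
    _ ↔ (∃ q1 ∈ M1.reach u, F1 q1 a) ∧ ∃ q2 ∈ M2.reach u, ∃ q2', M2.E q2 a q2' :=
      and_congr (h1 u a) NFA'.append_singleton_mem_lang
    _ ↔ ∃ q1 q2, some (q1, q2) ∈ (quotAut M1 M2 F2).reach u ∧
          F1 q1 a ∧ ∃ q2', M2.E q2 a q2' :=
      quotAut.exists_some_mem_reach.symm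
    _ ↔ ∃ s ∈ (quotAut M1 M2 F2).reach u,
          ∃ q1 q2, s = some (q1, q2) ∧ F1 q1 a ∧ ∃ q2', M2.E q2 a q2' := by
      simp only [← exists_and_left]
      grind

/-- the quotient construction is flanked by the relation
`((q1,q2),a) ∈ F` iff `(q1,a) ∈ F1` and `q2` has an outgoing `a`-transition
(and `(⊤,a) ∉ F` for all `a`). -/
theorem stmt9 {Q1 Q2 A : Type} [Fintype Q1] [Fintype Q2] [Fintype A]
    (M1 : NFA' Q1 A) (M2 : NFA' Q2 A)
    (F1 : Q1 → A → Prop) (F2 : Q2 → A → Prop)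
    (h1 : M1.Flanks F1) (h2 : M2.Flanks F2) :
    (quotAut M1 M2 F2).Flanks
      (fun s a => ∃ q1 q2, s = some (q1, q2) ∧ F1 q1 a ∧ ∃ q2', M2.E q2 a q2') :=
  stmt9_general M1 M2 F1 F2 h1 h2
end
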